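/- Let φ, ψ : ℝ → ℝ be bounded C^1 functions with bounded derivatives, define H : P_1(ℝ)×ℝ → ℝ by H(m,x) := (φ(x) − ∫_ℝ φ dm) · (∫_ℝ ψ dm), and define F : P_1(ℝ) → ℝ by F(m) := ∫_0^1 ∫_ℝ H((1−t)δ_0 + t·m, x) d(m − δ_0)(x) dt. Then for every m ∈ P_1(ℝ): F(m) = (1/2)·(ψ(0) + ∫_ℝ ψ dm)·(∫_ℝ φ dm − φ(0)); moreover F is Fréchet-differentiable at every m ∈ P_1(ℝ) with canonical derivative δF(m,x) = (1/2)·(ψ(x) − ∫_ℝ ψ dm)·(∫_ℝ φ dm − φ(0)) + (1/2)·(ψ(0) + ∫_ℝ ψ dm)·(φ(x) − ∫_ℝ φ dm). -/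

import Mathlib

open MeasureTheory Filter Topology

noncomputable section

/-- `π` is a coupling of the measures `m` and `μ` on `ℝ`. -/
def IsCoupling (π : Measure (ℝ × ℝ)) (m μ : Measure ℝ) : Prop :=
  π.map Prod.fst = m ∧ π.map Prod.snd = μ

/-- The Wasserstein distance of order one between two measures on `ℝ`:
the infimum over couplings `π` of `∫ |x - y| dπ(x,y)`. -/
def W1 (m μ : Measure ℝ) : ℝ :=
  sInf {c : ℝ | ∃ π : Measure (ℝ × ℝ), IsCoupling π m μ ∧ c = ∫ p, |p.1 - p.2| ∂π}

/-- Membership in `P₁(ℝ)`: Borel probability measures on `ℝ` with finite first moment. -/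
def MemP1 (m : Measure ℝ) : Prop :=
  IsProbabilityMeasure m ∧ Integrable (fun x => |x|) m

/-- Membership in `P([-K,K])`: probability measures supported in `[-K,K]`. -/
def MemPK (K : ℝ) (m : Measure ℝ) : Prop :=
  IsProbabilityMeasure m ∧ m (Set.Icc (-K) K)ᶜ = 0

/-- The convex combination `(1-t)·m₀ + t·m` of two measures. -/
def lineSeg (m₀ m : Measure ℝ) (t : ℝ) : Measure ℝ :=
  ENNReal.ofReal (1 - t) • m₀ + ENNReal.ofReal t • m

/-- The integral of `f` against the signed difference `m - μ`:
`∫ f d(m - μ) = ∫ f dm - ∫ f dμ`. -/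
def dInt (f : ℝ → ℝ) (m μ : Measure ℝ) : ℝ := (∫ x, f x ∂m) - ∫ x, f x ∂μ

/-- `W₁`-(sequential) compactness of a subset of `P₁(ℝ)`. -/
def W1Compact (𝒦 : Set (Measure ℝ)) : Prop :=
  (∀ m ∈ 𝒦, MemP1 m) ∧
  ∀ u : ℕ → Measure ℝ, (∀ n, u n ∈ 𝒦) →
    ∃ m ∈ 𝒦, ∃ φ : ℕ → ℕ, StrictMono φ ∧
      Tendsto (fun n => W1 (u (φ n)) m) atTop (𝓝 0)

/-- Sublinearity in the real variable, uniformly over `W₁`-compact sets of measures. -/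
def SublinearOnCompacts (G : Measure ℝ → ℝ → ℝ) : Prop :=
  ∀ 𝒦 : Set (Measure ℝ), W1Compact 𝒦 →
    ∃ C > 0, ∀ m ∈ 𝒦, ∀ x : ℝ, |G m x| ≤ C * (1 + |x|)

/-- `W₁`-continuity of a function of the measure variable at a point of `P₁(ℝ)`. -/
def W1ContinuousAt (g : Measure ℝ → ℝ) (m : Measure ℝ) : Prop :=
  ∀ ε > 0, ∃ η > 0, ∀ μ, MemP1 μ → W1 μ m < η → |g μ - g m| < ε

/-- Joint continuity of `G : P₁(ℝ) × ℝ → ℝ`. -/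
def JointlyContinuous (G : Measure ℝ → ℝ → ℝ) : Prop :=
  ∀ m x, MemP1 m → ∀ ε > 0, ∃ η > 0, ∀ μ y, MemP1 μ →
    W1 μ m < η → |y - x| < η → |G μ y - G m x| < ε

/-- Joint continuity of `G : P₁(ℝ) × ℝ × ℝ → ℝ`. -/
def JointlyContinuous2 (G : Measure ℝ → ℝ → ℝ → ℝ) : Prop :=
  ∀ m x y, MemP1 m → ∀ ε > 0, ∃ η > 0, ∀ μ x' y', MemP1 μ →
    W1 μ m < η → |x' - x| < η → |y' - y| < η → |G μ x' y' - G m x y| < ε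

/-- `H` is a version of the (linear functional) derivative of `F : P₁(ℝ) → ℝ`. -/
def IsDerivVersion (F : Measure ℝ → ℝ) (H : Measure ℝ → ℝ → ℝ) : Prop :=
  Measurable (Function.uncurry H) ∧
  SublinearOnCompacts H ∧
  ∀ m m₀, MemP1 m → MemP1 m₀ →
    F m - F m₀ = ∫ t in (0:ℝ)..1, dInt (H (lineSeg m₀ m t)) m m₀

/-- `H` is the canonical derivative of `F : P₁(ℝ) → ℝ`: the version of the derivative
satisfying `∫ H(μ,x) dμ(x) = 0` for every `μ ∈ P₁(ℝ)`. -/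
def IsCanonicalDeriv (F : Measure ℝ → ℝ) (H : Measure ℝ → ℝ → ℝ) : Prop :=
  IsDerivVersion F H ∧ ∀ μ, MemP1 μ → ∫ x, H μ x ∂μ = 0

/-- `G : P₁(ℝ) × ℝ → ℝ` is of class `C^{0,1}`. -/
def IsC01 (G : Measure ℝ → ℝ → ℝ) : Prop :=
  (∀ m, MemP1 m → ContDiff ℝ 1 (G m)) ∧
  (∀ x : ℝ, ∀ m, MemP1 m → W1ContinuousAt (fun μ => G μ x) m) ∧
  SublinearOnCompacts G ∧
  JointlyContinuous (fun m x => deriv (G m) x)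

/-- `F : P₁(ℝ) → ℝ` is of class `C¹` with canonical derivative `H`. -/
def IsC1 (F : Measure ℝ → ℝ) (H : Measure ℝ → ℝ → ℝ) : Prop :=
  IsCanonicalDeriv F H ∧ IsC01 H

/-- Joint continuity on `P([-K,K]) × [-K,K]`. -/
def JointlyContinuousOnK (K : ℝ) (G : Measure ℝ → ℝ → ℝ) : Prop :=
  ∀ m x, MemPK K m → x ∈ Set.Icc (-K) K → ∀ ε > 0, ∃ η > 0,
    ∀ μ y, MemPK K μ → y ∈ Set.Icc (-K) K → W1 μ m < η → |y - x| < η →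
      |G μ y - G m x| < ε

/-- Joint continuity on `P([-K,K]) × [-K,K]²`. -/
def JointlyContinuousOnK2 (K : ℝ) (G : Measure ℝ → ℝ → ℝ → ℝ) : Prop :=
  ∀ m x y, MemPK K m → x ∈ Set.Icc (-K) K → y ∈ Set.Icc (-K) K → ∀ ε > 0, ∃ η > 0,
    ∀ μ x' y', MemPK K μ → x' ∈ Set.Icc (-K) K → y' ∈ Set.Icc (-K) K →
      W1 μ m < η → |x' - x| < η → |y' - y| < η → |G μ x' y' - G m x y| < ε

end

/-- `F : P₁(ℝ) → ℝ` is Fréchet-differentiable at `m₀ ∈ P₁(ℝ)` with canonical derivative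
`H : ℝ → ℝ`: `∫ H dm₀ = 0` and `F(m) = F(m₀) + ∫ H d(m-m₀) + o(W₁(m,m₀))`. -/
def FrechetDiffAtP1 (F : Measure ℝ → ℝ) (m₀ : Measure ℝ) (H : ℝ → ℝ) : Prop :=
  (∫ x, H x ∂m₀ = 0) ∧
  ∀ ε > (0:ℝ), ∃ η > (0:ℝ), ∀ m, MemP1 m → W1 m m₀ < η →
    |F m - F m₀ - dInt H m m₀| ≤ ε * W1 m m₀

/-- The function `H(m,x) = (φ(x) - ∫ φ dm)·(∫ ψ dm)` of the counter-example. -/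
noncomputable def Hex (φ ψ : ℝ → ℝ) (m : Measure ℝ) (x : ℝ) : ℝ :=
  (φ x - ∫ y, φ y ∂m) * ∫ y, ψ y ∂m

/-- The function `F(m) = ∫₀¹ ∫ H((1-t)δ₀ + t·m, x) d(m - δ₀)(x) dt`. -/
noncomputable def Fex (φ ψ : ℝ → ℝ) (m : Measure ℝ) : ℝ :=
  ∫ t in (0:ℝ)..1, dInt (Hex φ ψ (lineSeg (Measure.dirac 0) m t)) m (Measure.dirac 0)

open scoped NNReal Pointwise

/-! The constant `∫ φ dν` integrates to zero against `m - δ₀`, so the integrand defining `F` is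
`∫ φ d(m - δ₀)` times `∫ ψ d((1-t)δ₀ + t·m)`. The latter is affine in `t`, so its average over
`[0, 1]` is the average of its endpoint values, whence the closed formula. That formula is a product
of two affine functions of `m`, so its first-order remainder at `m` is exactly
`(1/2) · ∫ ψ d(μ - m) · ∫ φ d(μ - m)`. Integrating over a coupling bounds each factor by a Lipschitz
constant times `W₁(μ, m)`, so the remainder is quadratic in `W₁(μ, m)`. -/

lemma lipschitzWith_of_abs_deriv_le {f : ℝ → ℝ} {C : ℝ} (hf : Differentiable ℝ f)
    (hC : ∀ x, |deriv f x| ≤ C) : LipschitzWith C.toNNReal f :=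
  lipschitzWith_of_nnnorm_deriv_le hf fun x => NNReal.le_toNNReal_of_coe_le (hC x)

lemma integrable_comp_of_lipschitzWith {Ω E F : Type*} [MeasurableSpace Ω] [NormedAddCommGroup E]
    [NormedAddCommGroup F] {μ : Measure Ω} [IsFiniteMeasure μ] {f : E → F} {g : Ω → E} {K : ℝ≥0}
    (hf : LipschitzWith K f) (hg : Integrable g μ) : Integrable (fun x => f (g x)) μ := by
  have hbound : Integrable (fun x => ‖f 0‖ + K * ‖g x‖) μ :=
    (integrable_const _).add (hg.norm.const_mul _)
  refine hbound.mono' (hf.continuous.comp_aestronglyMeasurable hg.1) (.of_forall fun x => ?_)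
  calc ‖f (g x)‖ ≤ ‖f 0‖ + ‖f (g x) - f 0‖ := norm_le_norm_add_norm_sub' _ _
    _ ≤ ‖f 0‖ + K * ‖g x - 0‖ := by gcongr; exact hf.norm_sub_le _ _
    _ = ‖f 0‖ + K * ‖g x‖ := by rw [sub_zero]

lemma integral_sub_integral_self {Ω E : Type*} [MeasurableSpace Ω] [NormedAddCommGroup E]
    [NormedSpace ℝ E] [CompleteSpace E] (P : Measure Ω) [IsProbabilityMeasure P] (f : Ω → E) :
    ∫ x, (f x - ∫ y, f y ∂P) ∂P = 0 := by
  simpa only [average_eq_integral] using integral_sub_average P f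

lemma MemP1.integrable_id {m : Measure ℝ} (hm : MemP1 m) : Integrable (fun x => x) m :=
  (integrable_norm_iff aestronglyMeasurable_id).1 hm.2

lemma MemP1.integrable_of_lipschitzWith {f : ℝ → ℝ} {K : ℝ≥0} {m : Measure ℝ} (hm : MemP1 m)
    (hf : LipschitzWith K f) : Integrable f m :=
  have := hm.1
  integrable_comp_of_lipschitzWith hf hm.integrable_id

section dInt

variable {f g : ℝ → ℝ} {m μ : Measure ℝ}

lemma dInt_add (hfm : Integrable f m) (hgm : Integrable g m) (hfμ : Integrable f μ)
    (hgμ : Integrable g μ) : dInt (fun x => f x + g x) m μ = dInt f m μ + dInt g m μ := by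
  simp only [dInt, integral_add hfm hgm, integral_add hfμ hgμ]
  ring

lemma dInt_sub_const [IsProbabilityMeasure m] [IsProbabilityMeasure μ] (hfm : Integrable f m)
    (hfμ : Integrable f μ) (c : ℝ) : dInt (fun x => f x - c) m μ = dInt f m μ := by
  simp [dInt, integral_sub hfm (integrable_const c), integral_sub hfμ (integrable_const c)]

lemma dInt_const_mul (c : ℝ) (f : ℝ → ℝ) (m μ : Measure ℝ) :
    dInt (fun x => c * f x) m μ = c * dInt f m μ := by
  simp only [dInt, integral_const_mul, mul_sub]

lemma dInt_mul_const (f : ℝ → ℝ) (c : ℝ) (m μ : Measure ℝ) :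
    dInt (fun x => f x * c) m μ = dInt f m μ * c := by
  simp only [dInt, integral_mul_const, sub_mul]

end dInt

section Wasserstein

variable {f : ℝ → ℝ} {K : ℝ≥0} {m μ : Measure ℝ} {π : Measure (ℝ × ℝ)}

lemma isCoupling_prod (m μ : Measure ℝ) [IsProbabilityMeasure m] [IsProbabilityMeasure μ] :
    IsCoupling (m.prod μ) m μ :=
  ⟨by simp, by simp⟩

lemma IsCoupling.integrable_fst (hπ : IsCoupling π m μ) (hf : Integrable f m) :
    Integrable (fun p => f p.1) π :=
  (hπ.1 ▸ hf).comp_measurable measurable_fst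

lemma IsCoupling.integrable_snd (hπ : IsCoupling π m μ) (hf : Integrable f μ) :
    Integrable (fun p => f p.2) π :=
  (hπ.2 ▸ hf).comp_measurable measurable_snd

lemma IsCoupling.dInt_eq_integral_sub (hπ : IsCoupling π m μ) (hm : Integrable f m)
    (hμ : Integrable f μ) : dInt f m μ = ∫ p, (f p.1 - f p.2) ∂π := by
  rw [integral_sub (hπ.integrable_fst hm) (hπ.integrable_snd hμ), dInt]
  obtain ⟨rfl, rfl⟩ := hπ
  rw [integral_map measurable_fst.aemeasurable hm.1, integral_map measurable_snd.aemeasurable hμ.1]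

lemma IsCoupling.abs_dInt_le (hπ : IsCoupling π m μ) (hf : LipschitzWith K f) (hm : MemP1 m)
    (hμ : MemP1 μ) : |dInt f m μ| ≤ K * ∫ p, |p.1 - p.2| ∂π := by
  have hfm := hm.integrable_of_lipschitzWith hf
  have hfμ := hμ.integrable_of_lipschitzWith hf
  have hdist : Integrable (fun p : ℝ × ℝ => |p.1 - p.2|) π :=
    ((hπ.integrable_fst hm.integrable_id).sub (hπ.integrable_snd hμ.integrable_id)).abs
  calc |dInt f m μ| = |∫ p, (f p.1 - f p.2) ∂π| := by rw [hπ.dInt_eq_integral_sub hfm hfμ]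
    _ ≤ ∫ p, |f p.1 - f p.2| ∂π := abs_integral_le_integral_abs
    _ ≤ ∫ p, K * |p.1 - p.2| ∂π :=
      integral_mono ((hπ.integrable_fst hfm).sub (hπ.integrable_snd hfμ)).abs
        (hdist.const_mul _) fun p => hf.dist_le_mul p.1 p.2
    _ = K * ∫ p, |p.1 - p.2| ∂π := integral_const_mul _ _

lemma W1_nonneg (m μ : Measure ℝ) : 0 ≤ W1 m μ := by
  refine Real.sInf_nonneg ?_
  rintro _ ⟨π, -, rfl⟩
  exact integral_nonneg fun p => abs_nonneg _

lemma abs_dInt_le_mul_W1 (hf : LipschitzWith K f) (hm : MemP1 m) (hμ : MemP1 μ) :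
    |dInt f m μ| ≤ K * W1 m μ := by
  have := hm.1
  have := hμ.1
  rw [W1, ← smul_eq_mul, ← Real.sInf_smul_of_nonneg K.coe_nonneg]
  refine le_csInf (Set.Nonempty.smul_set ⟨_, _, isCoupling_prod m μ, rfl⟩) ?_
  rintro _ ⟨_, ⟨π, hπ, rfl⟩, rfl⟩
  exact hπ.abs_dInt_le hf hm hμ

lemma frechetDiffAtP1_of_abs_le_mul_sq {F : Measure ℝ → ℝ} {m₀ : Measure ℝ} {H : ℝ → ℝ} {C : ℝ}
    (hC : 0 ≤ C) (hH : ∫ x, H x ∂m₀ = 0)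
    (hF : ∀ m, MemP1 m → |F m - F m₀ - dInt H m m₀| ≤ C * W1 m m₀ ^ 2) :
    FrechetDiffAtP1 F m₀ H := by
  refine ⟨hH, fun ε hε => ⟨ε / (C + 1), by positivity, fun m hm hW => ?_⟩⟩
  have hW0 := W1_nonneg m m₀
  have hCW : C * W1 m m₀ ≤ ε := by
    rw [lt_div_iff₀ (by positivity)] at hW
    linarith
  calc |F m - F m₀ - dInt H m m₀| ≤ C * W1 m m₀ ^ 2 := hF m hm
    _ = C * W1 m m₀ * W1 m m₀ := by ring
    _ ≤ ε * W1 m m₀ := by gcongr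

end Wasserstein

section Segment

variable {f φ ψ : ℝ → ℝ} {m₀ m : Measure ℝ}

lemma integral_lineSeg (hm₀ : Integrable f m₀) (hm : Integrable f m) {t : ℝ}
    (ht : t ∈ Set.Icc (0 : ℝ) 1) :
    ∫ x, f x ∂lineSeg m₀ m t = (1 - t) * ∫ x, f x ∂m₀ + t * ∫ x, f x ∂m := by
  rw [lineSeg, integral_add_measure (hm₀.smul_measure ENNReal.ofReal_ne_top)
    (hm.smul_measure ENNReal.ofReal_ne_top), integral_smul_measure, integral_smul_measure,
    ENNReal.toReal_ofReal (sub_nonneg.2 ht.2), ENNReal.toReal_ofReal ht.1, smul_eq_mul, smul_eq_mul]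

lemma integral_integral_lineSeg (hm₀ : Integrable f m₀) (hm : Integrable f m) :
    ∫ t in (0 : ℝ)..1, ∫ x, f x ∂lineSeg m₀ m t = (1 / 2) * (∫ x, f x ∂m₀ + ∫ x, f x ∂m) := by
  set a := ∫ x, f x ∂m₀
  set b := ∫ x, f x ∂m
  calc ∫ t in (0 : ℝ)..1, ∫ x, f x ∂lineSeg m₀ m t
      = ∫ t in (0 : ℝ)..1, (a + t * (b - a)) := by
        refine intervalIntegral.integral_congr fun t ht => ?_
        rw [Set.uIcc_of_le zero_le_one] at ht
        simp only [integral_lineSeg hm₀ hm ht]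
        ring
    _ = (1 / 2) * (a + b) := by
        rw [intervalIntegral.integral_add (by simp)
          (Continuous.intervalIntegrable (by fun_prop) _ _), intervalIntegral.integral_const,
          intervalIntegral.integral_mul_const, integral_id, smul_eq_mul]
        ring

lemma dInt_Hex [IsProbabilityMeasure m] [IsProbabilityMeasure m₀] (hm : Integrable φ m)
    (hm₀ : Integrable φ m₀) (ψ : ℝ → ℝ) (ν : Measure ℝ) :
    dInt (Hex φ ψ ν) m m₀ = dInt φ m m₀ * ∫ x, ψ x ∂ν := by
  unfold Hex
  rw [dInt_mul_const, dInt_sub_const hm hm₀]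

lemma Fex_eq [IsProbabilityMeasure m] (hφ : Integrable φ m) (hψ : Integrable ψ m) :
    Fex φ ψ m = (1 / 2) * (ψ 0 + ∫ x, ψ x ∂m) * ((∫ x, φ x ∂m) - φ 0) := by
  have integrable_dirac_zero (f : ℝ → ℝ) : Integrable f (Measure.dirac 0) :=
    integrable_dirac enorm_lt_top
  simp only [Fex, dInt_Hex hφ (integrable_dirac_zero φ)]
  rw [intervalIntegral.integral_const_mul,
    integral_integral_lineSeg (integrable_dirac_zero ψ) hψ, dInt, integral_dirac,
    integral_dirac]
  ring

end Segment

section Derivative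

variable {φ ψ : ℝ → ℝ} {m μ : Measure ℝ}

/-- The canonical derivative `δF(m, ·)` of the functional `F = Fex φ ψ`. -/
noncomputable def FexDeriv (φ ψ : ℝ → ℝ) (m : Measure ℝ) (x : ℝ) : ℝ :=
  (1 / 2) * (ψ x - ∫ y, ψ y ∂m) * ((∫ y, φ y ∂m) - φ 0) +
    (1 / 2) * (ψ 0 + ∫ y, ψ y ∂m) * (φ x - ∫ y, φ y ∂m)

lemma integral_FexDeriv [IsProbabilityMeasure m] (hφ : Integrable φ m) (hψ : Integrable ψ m) :
    ∫ x, FexDeriv φ ψ m x ∂m = 0 := by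
  have hφc : Integrable (fun x => φ x - ∫ y, φ y ∂m) m := hφ.sub (integrable_const _)
  have hψc : Integrable (fun x => ψ x - ∫ y, ψ y ∂m) m := hψ.sub (integrable_const _)
  unfold FexDeriv
  rw [integral_add ((hψc.const_mul _).mul_const _) (hφc.const_mul _), integral_mul_const,
    integral_const_mul, integral_const_mul, integral_sub_integral_self,
    integral_sub_integral_self]
  ring

lemma dInt_FexDeriv [IsProbabilityMeasure m] [IsProbabilityMeasure μ] (hφm : Integrable φ m)
    (hψm : Integrable ψ m) (hφμ : Integrable φ μ) (hψμ : Integrable ψ μ) (ν : Measure ℝ) :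
    dInt (FexDeriv φ ψ ν) μ m =
      (1 / 2) * dInt ψ μ m * ((∫ x, φ x ∂ν) - φ 0) +
        (1 / 2) * (ψ 0 + ∫ x, ψ x ∂ν) * dInt φ μ m := by
  have hc {f : ℝ → ℝ} {P : Measure ℝ} [IsProbabilityMeasure P] (hf : Integrable f P) (c : ℝ) :
      Integrable (fun x => f x - c) P := hf.sub (integrable_const c)
  unfold FexDeriv
  rw [dInt_add (((hc hψμ _).const_mul _).mul_const _) ((hc hφμ _).const_mul _)
    (((hc hψm _).const_mul _).mul_const _) ((hc hφm _).const_mul _), dInt_mul_const,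
    dInt_const_mul, dInt_const_mul, dInt_sub_const hψμ hψm, dInt_sub_const hφμ hφm]

lemma Fex_sub_sub_dInt_FexDeriv [IsProbabilityMeasure m] [IsProbabilityMeasure μ]
    (hφm : Integrable φ m) (hψm : Integrable ψ m) (hφμ : Integrable φ μ)
    (hψμ : Integrable ψ μ) :
    Fex φ ψ μ - Fex φ ψ m - dInt (FexDeriv φ ψ m) μ m =
      (1 / 2) * (dInt ψ μ m * dInt φ μ m) := by
  rw [Fex_eq hφm hψm, Fex_eq hφμ hψμ, dInt_FexDeriv hφm hψm hφμ hψμ, dInt, dInt]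
  ring

lemma frechetDiffAtP1_Fex {K L : ℝ≥0} (hφ : LipschitzWith K φ) (hψ : LipschitzWith L ψ)
    (hm : MemP1 m) : FrechetDiffAtP1 (Fex φ ψ) m (FexDeriv φ ψ m) := by
  have := hm.1
  have hφm := hm.integrable_of_lipschitzWith hφ
  have hψm := hm.integrable_of_lipschitzWith hψ
  refine frechetDiffAtP1_of_abs_le_mul_sq (C := (1 / 2) * (L * K)) (by positivity)
    (integral_FexDeriv hφm hψm) fun μ hμ => ?_
  have := hμ.1
  have hW0 := W1_nonneg μ m
  rw [Fex_sub_sub_dInt_FexDeriv hφm hψm (hμ.integrable_of_lipschitzWith hφ)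
    (hμ.integrable_of_lipschitzWith hψ)]
  calc |(1 / 2) * (dInt ψ μ m * dInt φ μ m)| = (1 / 2) * (|dInt ψ μ m| * |dInt φ μ m|) := by
        rw [abs_mul, abs_mul, abs_of_pos one_half_pos]
    _ ≤ (1 / 2) * ((L * W1 μ m) * (K * W1 μ m)) := by
        gcongr
        · exact abs_dInt_le_mul_W1 hψ hμ hm
        · exact abs_dInt_le_mul_W1 hφ hμ hm
    _ = (1 / 2) * (L * K) * W1 μ m ^ 2 := by ring

end Derivative

theorem stmt16_general {φ ψ : ℝ → ℝ} {K L : ℝ≥0} (hφ : LipschitzWith K φ)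
    (hψ : LipschitzWith L ψ) (m : Measure ℝ) (hm : MemP1 m) :
    Fex φ ψ m = (1/2) * (ψ 0 + ∫ y, ψ y ∂m) * ((∫ y, φ y ∂m) - φ 0) ∧
      FrechetDiffAtP1 (Fex φ ψ) m
        (fun x => (1/2) * (ψ x - ∫ y, ψ y ∂m) * ((∫ y, φ y ∂m) - φ 0) +
          (1/2) * (ψ 0 + ∫ y, ψ y ∂m) * (φ x - ∫ y, φ y ∂m)) :=
  have := hm.1
  ⟨Fex_eq (hm.integrable_of_lipschitzWith hφ) (hm.integrable_of_lipschitzWith hψ),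
    frechetDiffAtP1_Fex hφ hψ hm⟩

/-- the counter-example, Example in Appendix A: with
`H(m,x) = (φ(x) - ∫ φ dm)·(∫ ψ dm)`, the function
`F(m) = ∫₀¹ ∫ H((1-t)δ₀ + t·m, x) d(m-δ₀)(x) dt` equals
`(1/2)(ψ(0) + ∫ ψ dm)(∫ φ dm - φ(0))`, and is Fréchet-differentiable with canonical
derivative
`δF(m,x) = (1/2)(ψ(x) - ∫ ψ dm)(∫ φ dm - φ(0)) + (1/2)(ψ(0) + ∫ ψ dm)(φ(x) - ∫ φ dm)`. -/
theorem stmt16 (φ ψ : ℝ → ℝ) (hφ : ContDiff ℝ 1 φ) (hψ : ContDiff ℝ 1 ψ)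
    (hφb : ∃ C : ℝ, ∀ x, |φ x| ≤ C) (hφb' : ∃ C : ℝ, ∀ x, |deriv φ x| ≤ C)
    (hψb : ∃ C : ℝ, ∀ x, |ψ x| ≤ C) (hψb' : ∃ C : ℝ, ∀ x, |deriv ψ x| ≤ C) :
    ∀ m, MemP1 m →
      Fex φ ψ m = (1/2) * (ψ 0 + ∫ y, ψ y ∂m) * ((∫ y, φ y ∂m) - φ 0) ∧
      FrechetDiffAtP1 (Fex φ ψ) m
        (fun x => (1/2) * (ψ x - ∫ y, ψ y ∂m) * ((∫ y, φ y ∂m) - φ 0) +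
          (1/2) * (ψ 0 + ∫ y, ψ y ∂m) * (φ x - ∫ y, φ y ∂m)) := by
  rcases hφb', hψb' with ⟨⟨A, hA⟩, ⟨B, hB⟩⟩
  exact stmt16_general (lipschitzWith_of_abs_deriv_le (hφ.differentiable one_ne_zero) hA)
    (lipschitzWith_of_abs_deriv_le (hψ.differentiable one_ne_zero) hB)
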